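/- Let D be a positive natural number, p : ℝ → ℝ^D → ℝ a smooth everywhere-positive function, F : ℝ → ℝ^D → ℝ^D a smooth time-dependent vector field, and g : ℝ → ℝ. If p satisfies the Fokker–Planck equation ∂_t p(t,x) = -div_x(F(t,x)·p(t,x)) + (1/2)·g(t)²·Δ_x p(t,x) for all t ∈ ℝ and x ∈ ℝ^D, then for all t and x: ∂_t log p(t,x) + ⟨∇_x log p(t,x), F(t,x)⟩ + (1/2)·g(t)²·Δ_x log p(t,x) = -div_x(F(t,x) - g(t)²·∇_x log p(t,x)) + (1/2)·g(t)²·‖∇_x log p(t,x)‖². -/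

import Mathlib

open scoped BigOperators RealInnerProductSpace
open MeasureTheory

/-- Divergence of a vector field on `EuclideanSpace ℝ (Fin D)`. -/
noncomputable def divg {D : ℕ} (F : EuclideanSpace ℝ (Fin D) → EuclideanSpace ℝ (Fin D))
    (x : EuclideanSpace ℝ (Fin D)) : ℝ :=
  ∑ i, fderiv ℝ F x (EuclideanSpace.single i 1) i

/-- Laplacian of a scalar field on `EuclideanSpace ℝ (Fin D)`. -/
noncomputable def lap {D : ℕ} (f : EuclideanSpace ℝ (Fin D) → ℝ)
    (x : EuclideanSpace ℝ (Fin D)) : ℝ :=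
  divg (gradient f) x

/-!
The identities `∇ p = p ∇ log p` and `Δ p = p (Δ log p + ‖∇ log p‖²)` turn the Fokker–Planck
equation, divided by `p`, into
`∂ₜ log p = -div F - ⟨∇ log p, F⟩ + (g² / 2) (Δ log p + ‖∇ log p‖²)`. The drift adds
`⟨∇ log p, F⟩` and a second `(g² / 2) Δ log p`; the transport term cancels, and the resulting
`g² Δ log p` is the divergence of the `g² ∇ log p` subtracted from `F`.
-/

section Gradient

variable {E : Type*} [NormedAddCommGroup E] [InnerProductSpace ℝ E] [CompleteSpace E]
  {f : E → ℝ} {x : E}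

lemma contDiffAt_gradient {m n : WithTop ℕ∞} (hf : ContDiffAt ℝ n f x) (hmn : m + 1 ≤ n) :
    ContDiffAt ℝ m (gradient f) x :=
  (InnerProductSpace.toDual ℝ E).symm.contDiff.contDiffAt.comp x (hf.fderiv_right hmn)

lemma gradient_eq_smul_gradient_log (hf : DifferentiableAt ℝ f x) (hx : f x ≠ 0) :
    gradient f x = f x • gradient (fun y => Real.log (f y)) x := by
  simp only [gradient, fderiv.log hf hx, map_smul, smul_inv_smul₀ hx]

lemma differentiableAt_gradient_log (hf : ContDiffAt ℝ 2 f x) (hx : f x ≠ 0) :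
    DifferentiableAt ℝ (gradient fun y => Real.log (f y)) x :=
  (contDiffAt_gradient (hf.log hx) one_add_one_eq_two.le).differentiableAt one_ne_zero

end Gradient

section Divergence

variable {D : ℕ} {V W : EuclideanSpace ℝ (Fin D) → EuclideanSpace ℝ (Fin D)}
  {f : EuclideanSpace ℝ (Fin D) → ℝ} {x : EuclideanSpace ℝ (Fin D)}

lemma divg_congr_of_eventuallyEq (h : V =ᶠ[nhds x] W) : divg V x = divg W x := by
  simp only [divg, h.fderiv_eq]

lemma divg_sub (hV : DifferentiableAt ℝ V x) (hW : DifferentiableAt ℝ W x) :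
    divg (fun y => V y - W y) x = divg V x - divg W x := by
  simp only [divg, fderiv_fun_sub hV hW, sub_apply, PiLp.sub_apply, Finset.sum_sub_distrib]

lemma divg_const_smul (c : ℝ) (V : EuclideanSpace ℝ (Fin D) → EuclideanSpace ℝ (Fin D))
    (x : EuclideanSpace ℝ (Fin D)) : divg (fun y => c • V y) x = c * divg V x := by
  have hfderiv : fderiv ℝ (fun y => c • V y) x = c • fderiv ℝ V x :=
    congrFun (fderiv_const_smul_field c) x
  simp only [divg, hfderiv, smul_apply, PiLp.smul_apply, smul_eq_mul, Finset.mul_sum]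

lemma sum_fderiv_single_mul_eq_inner_gradient (f : EuclideanSpace ℝ (Fin D) → ℝ)
    (x v : EuclideanSpace ℝ (Fin D)) :
    ∑ i, fderiv ℝ f x (EuclideanSpace.single i 1) * v i = ⟪gradient f x, v⟫ := by
  simp only [← (EuclideanSpace.basisFun (Fin D) ℝ).sum_inner_mul_inner (gradient f x) v,
    EuclideanSpace.basisFun_apply, EuclideanSpace.inner_single_left, inner_gradient_left, map_one,
    one_mul]

lemma divg_smul (hf : DifferentiableAt ℝ f x) (hV : DifferentiableAt ℝ V x) :
    divg (fun y => f y • V y) x = f x * divg V x + ⟪gradient f x, V x⟫ := by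
  simp only [divg, fderiv_fun_smul hf hV, add_apply, smul_apply,
    ContinuousLinearMap.smulRight_apply, PiLp.add_apply, PiLp.smul_apply, smul_eq_mul,
    Finset.sum_add_distrib, ← Finset.mul_sum, sum_fderiv_single_mul_eq_inner_gradient]

lemma divg_smul_eq_mul_log (hf : DifferentiableAt ℝ f x) (hx : f x ≠ 0)
    (hV : DifferentiableAt ℝ V x) :
    divg (fun y => f y • V y) x
      = f x * (divg V x + ⟪gradient (fun y => Real.log (f y)) x, V x⟫) := by
  rw [divg_smul hf hV, gradient_eq_smul_gradient_log hf hx, real_inner_smul_left, mul_add]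

lemma lap_eq_mul_lap_log (hf : ContDiffAt ℝ 2 f x) (hx : f x ≠ 0) :
    lap f x = f x * (lap (fun y => Real.log (f y)) x
      + ‖gradient (fun y => Real.log (f y)) x‖ ^ 2) := by
  have hgrad : gradient f =ᶠ[nhds x] fun y => f y • gradient (fun z => Real.log (f z)) y := by
    filter_upwards [hf.eventually (by simp), hf.continuousAt.eventually_ne hx] with y hy hy0
    exact gradient_eq_smul_gradient_log (hy.differentiableAt two_ne_zero) hy0
  calc lap f x = divg (fun y => f y • gradient (fun z => Real.log (f z)) y) x :=
        divg_congr_of_eventuallyEq hgrad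
    _ = f x * (divg (gradient fun y => Real.log (f y)) x
          + ⟪gradient (fun y => Real.log (f y)) x, gradient (fun y => Real.log (f y)) x⟫) :=
        divg_smul_eq_mul_log (hf.differentiableAt two_ne_zero) hx
          (differentiableAt_gradient_log hf hx)
    _ = _ := by rw [real_inner_self_eq_norm_sq, lap]

end Divergence

section FokkerPlanck

variable {D : ℕ} {p : ℝ → EuclideanSpace ℝ (Fin D) → ℝ} {t : ℝ} {x : EuclideanSpace ℝ (Fin D)}

lemma deriv_log_eq_of_fokkerPlanck {V : EuclideanSpace ℝ (Fin D) → EuclideanSpace ℝ (Fin D)}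
    {c : ℝ} (hpt : DifferentiableAt ℝ (fun τ => p τ x) t) (hpx : ContDiffAt ℝ 2 (p t) x)
    (hp0 : p t x ≠ 0) (hV : DifferentiableAt ℝ V x)
    (hFP : deriv (fun τ => p τ x) t = -divg (fun y => p t y • V y) x + c * lap (p t) x) :
    deriv (fun τ => Real.log (p τ x)) t
      = -divg V x - ⟪gradient (fun y => Real.log (p t y)) x, V x⟫
        + c * (lap (fun y => Real.log (p t y)) x
          + ‖gradient (fun y => Real.log (p t y)) x‖ ^ 2) := by
  rw [deriv.log hpt hp0, hFP, divg_smul_eq_mul_log (hpx.differentiableAt two_ne_zero) hp0 hV,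
    lap_eq_mul_lap_log hpx hp0]
  field_simp
  ring

theorem ito_drift_forward_general
    {F : ℝ → EuclideanSpace ℝ (Fin D) → EuclideanSpace ℝ (Fin D)} {g : ℝ → ℝ}
    (hpt : DifferentiableAt ℝ (fun τ => p τ x) t) (hpx : ContDiffAt ℝ 2 (p t) x)
    (hppos : 0 < p t x) (hF : DifferentiableAt ℝ (F t) x)
    (hFP : deriv (fun τ => p τ x) t
      = -divg (fun y => p t y • F t y) x + (1 / 2) * g t ^ 2 * lap (p t) x) :
    deriv (fun τ => Real.log (p τ x)) t
        + ⟪gradient (fun y => Real.log (p t y)) x, F t x⟫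
        + (1 / 2) * g t ^ 2 * lap (fun y => Real.log (p t y)) x
      = -divg (fun y => F t y - g t ^ 2 • gradient (fun z => Real.log (p t z)) y) x
        + (1 / 2) * g t ^ 2 * ‖gradient (fun y => Real.log (p t y)) x‖ ^ 2 := by
  have hscore := differentiableAt_gradient_log hpx hppos.ne'
  have hdivg : divg (fun y => F t y - g t ^ 2 • gradient (fun z => Real.log (p t z)) y) x
      = divg (F t) x - g t ^ 2 * lap (fun y => Real.log (p t y)) x := by
    rw [divg_sub hF (hscore.fun_const_smul _), divg_const_smul, lap]
  rw [deriv_log_eq_of_fokkerPlanck hpt hpx hppos.ne' hF hFP, hdivg]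
  ring

end FokkerPlanck

/-- Itô drift of `log p(t, x_t)` along the forward diffusion
(analytic core of the augmented forward SDE, Theorem 2). -/
theorem ito_drift_forward {D : ℕ} (hD : 0 < D)
    (p : ℝ → EuclideanSpace ℝ (Fin D) → ℝ)
    (F : ℝ → EuclideanSpace ℝ (Fin D) → EuclideanSpace ℝ (Fin D))
    (g : ℝ → ℝ)
    (hp : ContDiff ℝ (⊤ : ℕ∞) (fun q : ℝ × EuclideanSpace ℝ (Fin D) => p q.1 q.2))
    (hppos : ∀ t x, 0 < p t x)
    (hF : ContDiff ℝ (⊤ : ℕ∞) (fun q : ℝ × EuclideanSpace ℝ (Fin D) => F q.1 q.2))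
    (hFP : ∀ t x, deriv (fun τ => p τ x) t
      = - divg (fun y => p t y • F t y) x + (1 / 2) * g t ^ 2 * lap (p t) x) :
    ∀ t x, deriv (fun τ => Real.log (p τ x)) t
        + ⟪gradient (fun y => Real.log (p t y)) x, F t x⟫
        + (1 / 2) * g t ^ 2 * lap (fun y => Real.log (p t y)) x
      = - divg (fun y => F t y - g t ^ 2 • gradient (fun z => Real.log (p t z)) y) x
        + (1 / 2) * g t ^ 2 * ‖gradient (fun y => Real.log (p t y)) x‖ ^ 2 := by
  intro t x
  have hpt : ContDiff ℝ (⊤ : ℕ∞) (fun τ => p τ x) := hp.comp (contDiff_prodMk_left x)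
  have hpx : ContDiff ℝ (⊤ : ℕ∞) (p t) := hp.comp (contDiff_prodMk_right t)
  have hFx : ContDiff ℝ (⊤ : ℕ∞) (F t) := hF.comp (contDiff_prodMk_right t)
  exact ito_drift_forward_general (hpt.differentiable (by simp) t)
    (contDiff_infty.1 hpx 2).contDiffAt (hppos t x) (hFx.differentiable (by simp) x) (hFP t x)
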